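/- Let N = 3, m₀(z) = (1 + z²)/√2, W = |m₀|²/3, and let m be the associated measure on S₃ with m̂(λ) = ∫_{S₃} χ_λ dm. Then for every λ ∈ ℤ[1/3], m̂(λ) = 𝓗^s((𝐂 + λ) ∩ 𝐂), where 𝐂 is the middle-thirds Cantor set, s = log₃ 2 is its Hausdorff dimension, and 𝓗^s is the s-dimensional Hausdorff measure. In particular m̂(λ) = 0 whenever |λ| ≥ 1. -/

import Mathlib

noncomputable section

open MeasureTheory Real Complex Filter Finset
open scoped ENNReal

/-! ### Basic instances for the circle -/

instance : MeasurableSpace Circle := borel Circle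
instance : BorelSpace Circle := ⟨rfl⟩

/-- The point `e^{-2πit}` of the unit circle. -/
def ee (t : ℝ) : Circle := Circle.exp (-(2 * π * t))

/-- Normalized Lebesgue measure on the circle, realized as the image of Lebesgue
measure on `[0,1)` under `t ↦ e^{-2πit}`. -/
def circleMeasure : Measure Circle := (volume.restrict (Set.Ico (0:ℝ) 1)).map ee

/-! ### The Baumslag–Solitar group `BS(1,N)` -/

/-- The single relation `u t u⁻¹ (t^N)⁻¹` defining `BS(1,N)`. -/
def BSRel (N : ℕ) : Set (FreeGroup Bool) :=
  {FreeGroup.of true * FreeGroup.of false * (FreeGroup.of true)⁻¹ * ((FreeGroup.of false) ^ N)⁻¹}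

/-- The Baumslag–Solitar group `BS(1,N) = ⟨u,t | u t u⁻¹ = t^N⟩`. -/
abbrev BS (N : ℕ) := PresentedGroup (BSRel N)

/-- The generator `u` of `BS(1,N)`. -/
def BS.u (N : ℕ) : BS N := PresentedGroup.of true

/-- The generator `t` of `BS(1,N)`. -/
def BS.t (N : ℕ) : BS N := PresentedGroup.of false

/-! ### The solenoid -/

/-- The `N`-solenoid, as a subgroup of the product of circles indexed by `ℤ`:
all sequences `(z_n)` with `z_{n+1}^N = z_n`. -/
def solenoidGroup (N : ℕ) : Subgroup (ℤ → Circle) where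
  carrier := {z | ∀ n : ℤ, z (n + 1) ^ N = z n}
  one_mem' := by intro n; simp
  mul_mem' := by
    intro a b ha hb n
    simp only [Set.mem_setOf_eq, Pi.mul_apply, mul_pow] at *
    rw [ha n, hb n]
  inv_mem' := by
    intro a ha n
    simp only [Set.mem_setOf_eq, Pi.inv_apply, inv_pow] at *
    rw [ha n]

/-- The `N`-solenoid as a type. -/
abbrev Solenoid (N : ℕ) := ↥(solenoidGroup N)

/-- The shift `S` on the solenoid: `(S z)_n = z_{n-1}`. -/
def shift (N : ℕ) (z : Solenoid N) : Solenoid N :=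
  ⟨fun n => z.val (n - 1), by
    intro n
    have h := z.property (n - 1)
    simpa using h⟩

/-- The inverse `S⁻¹` of the shift on the solenoid: `(S⁻¹ z)_n = z_{n+1}`. -/
def shiftInv (N : ℕ) (z : Solenoid N) : Solenoid N :=
  ⟨fun n => z.val (n + 1), fun n => z.property (n + 1)⟩

/-- Integer powers `Sⁿ` of the shift. -/
def shiftZ (N : ℕ) (n : ℤ) : Solenoid N → Solenoid N :=
  if 0 ≤ n then (shift N)^[n.toNat] else (shiftInv N)^[(-n).toNat]

/-- The measure `ν ∘ S`, defined by `(ν ∘ S)(E) = ν(S(E))`. -/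
def measShift (N : ℕ) (ν : Measure (Solenoid N)) : Measure (Solenoid N) :=
  ν.map (shiftInv N)

/-- `ν` is quasi-invariant for the shift `S`: `ν ∘ S` and `ν` are mutually
absolutely continuous. -/
def QuasiInvariant (N : ℕ) (ν : Measure (Solenoid N)) : Prop :=
  measShift N ν ≪ ν ∧ ν ≪ measShift N ν

/-- The shift `S` is ergodic with respect to `ν`. -/
def ShiftErgodic (N : ℕ) (ν : Measure (Solenoid N)) : Prop :=
  ∀ E : Set (Solenoid N), MeasurableSet E → shift N ⁻¹' E = E → ν E = 0 ∨ ν Eᶜ = 0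

/-- A bounded measurable (`L^∞`-type) function. -/
def BddMeasurable {α : Type*} [MeasurableSpace α] (f : α → ℂ) : Prop :=
  Measurable f ∧ ∃ C : ℝ, ∀ x, ‖f x‖ ≤ C

/-! ### The representation `π_{ν,θ}` -/

/-- The pair of unitaries `U, T` on `L²(ν)` given by
`Uξ = √Δ ⬝ θ ⬝ (ξ∘S)` (with `Δ = d(ν∘S)/dν`) and `(Tξ)(z) = z₀ ξ(z)`. -/
def IsPiNuTheta (N : ℕ) (ν : Measure (Solenoid N)) (θ : Solenoid N → Circle)
    (U T : unitary (Lp ℂ 2 ν →L[ℂ] Lp ℂ 2 ν)) : Prop :=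
  (∀ ξ : Lp ℂ 2 ν,
      (((U : Lp ℂ 2 ν →L[ℂ] Lp ℂ 2 ν) ξ : Lp ℂ 2 ν) : Solenoid N → ℂ) =ᵐ[ν]
        fun z => (Real.sqrt (((measShift N ν).rnDeriv ν z).toReal) : ℂ) * (θ z : ℂ) *
          (ξ : Solenoid N → ℂ) (shift N z)) ∧
  (∀ ξ : Lp ℂ 2 ν,
      (((T : Lp ℂ 2 ν →L[ℂ] Lp ℂ 2 ν) ξ : Lp ℂ 2 ν) : Solenoid N → ℂ) =ᵐ[ν]
        fun z => ((z.val 0 : Circle) : ℂ) * (ξ : Solenoid N → ℂ) z)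

/-- `φ` is a cyclic vector for the (unitary) representation generated by `U` and `T`:
the only closed subspace containing `φ` and invariant under the group generated by
`U` and `T` is the whole space. -/
def cyclicVector {H : Type*} [NormedAddCommGroup H] [InnerProductSpace ℂ H]
    [CompleteSpace H] (U T : unitary (H →L[ℂ] H)) (φ : H) : Prop :=
  ∀ K : Submodule ℂ H, IsClosed (K : Set H) → φ ∈ K →
    (∀ g ∈ Subgroup.closure ({U, T} : Set (unitary (H →L[ℂ] H))),
      ∀ v ∈ K, (g : H →L[ℂ] H) v ∈ K) → K = ⊤

/-! ### Filters and the Ruelle operator -/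

/-- The quadrature mirror filter condition `R_{m₀} 1 = 1`, written out on `[0,1)`:
`(1/N) ∑_{k<N} |m₀(e^{-2πi(x+k)/N})|² = 1` for a.e. `x`. -/
def QMF (N : ℕ) (m₀ : Circle → ℂ) : Prop :=
  ∀ᵐ x ∂(volume.restrict (Set.Ico (0:ℝ) 1)),
    (1 / N : ℝ) * ∑ k ∈ Finset.range N, ‖m₀ (ee ((x + k) / N))‖ ^ 2 = 1

/-- `h` is a fixed point of the Ruelle operator `R_{m₀}`:
`(1/N) ∑_{w^N = z} |m₀(w)|² h(w) = h(z)` for a.e. `z`, written out on `[0,1)`. -/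
def RuelleFixed (N : ℕ) (m₀ : Circle → ℂ) (h : Circle → ℂ) : Prop :=
  ∀ᵐ x ∂(volume.restrict (Set.Ico (0:ℝ) 1)),
    (1 / N : ℂ) * ∑ k ∈ Finset.range N,
        (‖m₀ (ee ((x + k) / N))‖ ^ 2 : ℝ) * h (ee ((x + k) / N)) = h (ee x)

/-- The wavelet representation of `BS(1,N)` associated to a filter `m₀`, realized
on `L²(m)` for a measure `m` on the solenoid: `Uξ = m₀ ⬝ (ξ∘S)` and `T` is
multiplication by the coordinate `z₀`. -/
def IsWaveletRepOn (N : ℕ) (m₀ : Circle → ℂ) (m : Measure (Solenoid N))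
    (U T : unitary (Lp ℂ 2 m →L[ℂ] Lp ℂ 2 m)) : Prop :=
  (∀ ξ : Lp ℂ 2 m,
      (((U : Lp ℂ 2 m →L[ℂ] Lp ℂ 2 m) ξ : Lp ℂ 2 m) : Solenoid N → ℂ) =ᵐ[m]
        fun z => m₀ (z.val 0) * (ξ : Solenoid N → ℂ) (shift N z)) ∧
  (∀ ξ : Lp ℂ 2 m,
      (((T : Lp ℂ 2 m →L[ℂ] Lp ℂ 2 m) ξ : Lp ℂ 2 m) : Solenoid N → ℂ) =ᵐ[m]
        fun z => ((z.val 0 : Circle) : ℂ) * (ξ : Solenoid N → ℂ) z)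

/-- The measure `m` on the solenoid associated to a weight `W` (with `N W = |m₀|²`):
its `z₀`-marginal is normalized Lebesgue measure on the circle, and
`d(m∘S)/dm = N W`. -/
def IsAssociatedMeasure (N : ℕ) (W : Circle → ℝ) (m : Measure (Solenoid N)) : Prop :=
  IsProbabilityMeasure m ∧
  m.map (fun z : Solenoid N => z.val 0) = circleMeasure ∧
  measShift N m = m.withDensity (fun z => ENNReal.ofReal (N * W (z.val 0)))

end

noncomputable section CantorPart

open MeasureTheory

/-! ### Hausdorff measure of the Cantor set -/

/-- The exponent `log₃ 2`. -/
abbrev cS : ℝ := Real.logb 3 2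

lemma cS_pos : 0 < cS := Real.logb_pos (by norm_num) (by norm_num)

lemma cS_lt_one : cS < 1 := by
  rw [cS, Real.logb_lt_iff_lt_rpow (by norm_num) (by norm_num)]; norm_num

lemma three_rpow_cS : (3 : ℝ) ^ cS = 2 := Real.rpow_logb (by norm_num) (by norm_num) (by norm_num)

lemma div_three_rpow {x : ℝ} (hx : 0 ≤ x) : (x / 3) ^ cS = x ^ cS / 2 := by
  rw [Real.div_rpow hx (by norm_num), three_rpow_cS]

lemma key_ineq {u v : ℝ} (hu : 0 ≤ u) (hv : 0 ≤ v) (hu1 : u ≤ 1) (hv1 : v ≤ 1) :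
    u ^ cS + v ^ cS ≤ (1 + u + v) ^ cS := by
  have h := (Real.concaveOn_rpow cS_pos.le cS_lt_one.le).2 (Set.mem_Ici.2 hu) (Set.mem_Ici.2 hv)
    (by norm_num : (0:ℝ) ≤ 1/2) (by norm_num : (0:ℝ) ≤ 1/2) (by norm_num)
  simp only [smul_eq_mul] at h
  have h2 : u ^ cS + v ^ cS ≤ 2 * (1/2 * u + 1/2 * v) ^ cS := by linarith
  have h3 : 2 * (1/2 * u + 1/2 * v) ^ cS = (3 * (1/2 * u + 1/2 * v)) ^ cS := by
    rw [Real.mul_rpow (by norm_num) (by positivity), three_rpow_cS]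
  rw [h3] at h2
  exact h2.trans (Real.rpow_le_rpow (by positivity) (by linarith) cS_pos.le)

/-- Ternary value of a bit sequence. -/
def cT (b : ℕ → Bool) : ℝ := Real.ofDigits (fun i => cond (b i) (2 : Fin 3) 0)

/-- Binary value of a bit sequence. -/
def cB (b : ℕ → Bool) : ℝ := Real.ofDigits (fun i => cond (b i) (1 : Fin 2) 0)

lemma cT_succ (b : ℕ → Bool) :
    cT b = (cond (b 0) 2 0 + cT (fun i => b (i + 1))) / 3 := by
  rw [cT, Real.ofDigits_eq_sum_add_ofDigits _ 1, cT]
  simp only [Finset.sum_range_one, Real.ofDigitsTerm]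
  cases b 0 <;> simp <;> ring

lemma cB_succ (b : ℕ → Bool) :
    cB b = (cond (b 0) 1 0 + cB (fun i => b (i + 1))) / 2 := by
  rw [cB, Real.ofDigits_eq_sum_add_ofDigits _ 1, cB]
  simp only [Finset.sum_range_one, Real.ofDigitsTerm]
  cases b 0 <;> simp <;> ring

lemma cT_nonneg (b) : 0 ≤ cT b := Real.ofDigits_nonneg _
lemma cB_nonneg (b) : 0 ≤ cB b := Real.ofDigits_nonneg _
lemma cT_le (b) : cT b ≤ 1 := Real.ofDigits_le_one _
lemma cB_le (b) : cB b ≤ 1 := Real.ofDigits_le_one _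

lemma le_of_err {x y : ℝ} (h : ∀ n : ℕ, x ≤ y + (1/2) ^ n) : x ≤ y := by
  have : Filter.Tendsto (fun n : ℕ => y + (1/2:ℝ) ^ n) Filter.atTop (nhds (y + 0)) :=
    tendsto_const_nhds.add (tendsto_pow_atTop_nhds_zero_of_lt_one (by norm_num) (by norm_num))
  rw [add_zero] at this
  exact ge_of_tendsto' this h

lemma cB_le_rpow (b : ℕ → Bool) : cB b ≤ cT b ^ cS := by
  refine le_of_err fun n => ?_
  induction n generalizing b with
  | zero =>
    have := Real.rpow_nonneg (cT_nonneg b) cS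
    have := cB_le b
    simp; linarith
  | succ n ih =>
    have h := ih (fun i => b (i + 1))
    have h0 := cT_nonneg (fun i => b (i + 1))
    have h1 := cT_le (fun i => b (i + 1))
    rw [cT_succ, cB_succ, pow_succ]
    cases b 0
    · simp only [cond_false, zero_add]
      rw [div_three_rpow h0]; linarith
    · simp only [cond_true]
      rw [div_three_rpow (by linarith)]
      have := key_ineq zero_le_one h0 le_rfl h1
      rw [Real.one_rpow] at this
      norm_num at this
      linarith

lemma one_sub_cB_le_rpow (b : ℕ → Bool) : 1 - cB b ≤ (1 - cT b) ^ cS := by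
  refine le_of_err fun n => ?_
  induction n generalizing b with
  | zero =>
    have := Real.rpow_nonneg (sub_nonneg.2 (cT_le b)) cS
    have := cB_nonneg b
    simp; linarith
  | succ n ih =>
    have h := ih (fun i => b (i + 1))
    have h0 := cT_nonneg (fun i => b (i + 1))
    have h1 := cT_le (fun i => b (i + 1))
    rw [cT_succ, cB_succ, pow_succ]
    set t := cT (fun i => b (i + 1))
    cases b 0
    · simp only [cond_false, zero_add]
      rw [show 1 - t / 3 = (1 + 1 + (1 - t)) / 3 by ring, div_three_rpow (by linarith)]
      have := key_ineq zero_le_one (sub_nonneg.2 h1) le_rfl (by linarith)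
      rw [Real.one_rpow] at this
      generalize (1 + 1 + (1 - t)) ^ cS = A at *
      generalize (1 - t) ^ cS = B at *
      linarith
    · simp only [cond_true]
      rw [show 1 - (2 + t) / 3 = (1 - t) / 3 by ring, div_three_rpow (by linarith)]
      linarith

lemma cB_sub_le (b c : ℕ → Bool) (hbc : cT b ≤ cT c) : cB c - cB b ≤ (cT c - cT b) ^ cS := by
  refine le_of_err fun n => ?_
  induction n generalizing b c with
  | zero =>
    have := Real.rpow_nonneg (sub_nonneg.2 hbc) cS
    have := cB_nonneg b
    have := cB_le c
    simp; linarith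
  | succ n ih =>
    have h := ih (fun i => b (i + 1)) (fun i => c (i + 1))
    have h0 := cT_nonneg (fun i => b (i + 1))
    have h1 := cT_le (fun i => b (i + 1))
    have k0 := cT_nonneg (fun i => c (i + 1))
    have k1 := cT_le (fun i => c (i + 1))
    have hb := one_sub_cB_le_rpow (fun i => b (i + 1))
    have hc := cB_le_rpow (fun i => c (i + 1))
    rw [cT_succ b, cT_succ c] at hbc
    rw [cT_succ b, cB_succ b, cT_succ c, cB_succ c, pow_succ]
    set t := cT (fun i => b (i + 1))
    set r := cT (fun i => c (i + 1))
    cases hb0 : b 0 <;> cases hc0 : c 0 <;> simp only [hb0, hc0, cond_true, cond_false, zero_add] at hbc ⊢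
    · rw [show r / 3 - t / 3 = (r - t) / 3 by ring, div_three_rpow (by linarith)]
      linarith [h (by linarith)]
    · rw [show (2 + r) / 3 - t / 3 = (1 + (1 - t) + r) / 3 by ring, div_three_rpow (by linarith)]
      have := key_ineq (sub_nonneg.2 h1) k0 (by linarith) k1
      have : (0:ℝ) ≤ (1/2) ^ n := by positivity
      linarith
    · linarith
    · rw [show (2 + r) / 3 - (2 + t) / 3 = (r - t) / 3 by ring, div_three_rpow (by linarith)]
      linarith [h (by linarith)]

lemma abs_cB_sub_le (b c : ℕ → Bool) : |cB b - cB c| ≤ |cT b - cT c| ^ cS := by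
  wlog h : cT c ≤ cT b generalizing b c
  · rw [abs_sub_comm, abs_sub_comm (cT b)]; exact this c b (le_of_not_ge h)
  rw [abs_of_nonneg (sub_nonneg.2 h)]
  refine abs_le.2 ⟨?_, cB_sub_le c b h⟩
  -- monotonicity
  suffices cB c - cB b ≤ 0 by linarith [Real.rpow_nonneg (sub_nonneg.2 h) cS]
  refine le_of_err fun n => ?_
  rw [zero_add]
  induction n generalizing b c with
  | zero => simp; linarith [cB_nonneg b, cB_le c]
  | succ n ih =>
    have hh := ih (fun i => b (i + 1)) (fun i => c (i + 1))
    have h0 := cT_nonneg (fun i => b (i + 1))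
    have h1 := cT_le (fun i => b (i + 1))
    have k0 := cT_nonneg (fun i => c (i + 1))
    have k1 := cT_le (fun i => c (i + 1))
    have hb := cB_nonneg (fun i => b (i + 1))
    have hc := cB_le (fun i => c (i + 1))
    rw [cT_succ b, cT_succ c] at h
    rw [cB_succ b, cB_succ c, pow_succ]
    have : (0:ℝ) ≤ (1/2) ^ n := by positivity
    cases hb0 : b 0 <;> cases hc0 : c 0 <;> simp only [hb0, hc0, cond_true, cond_false, zero_add] at h ⊢
    · linarith [hh (by linarith)]
    · linarith
    · linarith
    · linarith [hh (by linarith)]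

open Classical in
/-- The Cantor function on the Cantor set. -/
def cF (x : ℝ) : ℝ := if h : x ∈ cantorSet then cB (cantorSetEquivNatToBool ⟨x, h⟩) else 0

lemma cT_equiv {x : ℝ} (h : x ∈ cantorSet) : cT (cantorSetEquivNatToBool ⟨x, h⟩) = x :=
  congrArg Subtype.val (cantorSetEquivNatToBool.symm_apply_apply ⟨x, h⟩)

lemma cF_holder : HolderOnWith 1 ⟨cS, cS_pos.le⟩ cF cantorSet := by
  intro x hx y hy
  have h := abs_cB_sub_le (cantorSetEquivNatToBool ⟨x, hx⟩) (cantorSetEquivNatToBool ⟨y, hy⟩)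
  rw [cT_equiv, cT_equiv] at h
  simp only [cF, hx, hy, dif_pos, edist_dist, Real.dist_eq]
  rw [ENNReal.coe_one, one_mul]
  change _ ≤ _ ^ cS
  rw [ENNReal.ofReal_rpow_of_nonneg (abs_nonneg _) cS_pos.le]
  exact ENNReal.ofReal_le_ofReal h

lemma cF_surj : Set.Icc (0:ℝ) 1 ⊆ cF '' cantorSet := by
  intro y hy
  obtain ⟨d, -, rfl⟩ := Real.ofDigits_SurjOn (b := 2) (by norm_num) hy
  refine ⟨(cantorSetEquivNatToBool.symm (fun i => decide (d i = 1))).1,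
    (cantorSetEquivNatToBool.symm (fun i => decide (d i = 1))).2, ?_⟩
  rw [cF, dif_pos (cantorSetEquivNatToBool.symm (fun i => decide (d i = 1))).2]
  rw [Subtype.coe_eta, Equiv.apply_symm_apply, cB]
  congr 1
  ext i
  generalize d i = e
  fin_cases e <;> simp

lemma one_le_hausdorff_cantor : 1 ≤ (μH[cS] : Measure ℝ) cantorSet := by
  have h := cF_holder.hausdorffMeasure_image_le cS_pos (d := 1) zero_le_one
  have h2 := (measure_mono (μ := (μH[1] : Measure ℝ)) cF_surj).trans h
  rw [hausdorffMeasure_real, Real.volume_Icc] at h2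
  have h3 : (1 : ENNReal) ≤ (μH[cS * 1] : Measure ℝ) cantorSet := by
    have h4 : ENNReal.ofReal (1 - 0) ≤ ((1 : NNReal) : ENNReal) ^ (1:ℝ) *
      (μH[cS * 1] : Measure ℝ) cantorSet := h2
    simpa using h4
  rwa [mul_one] at h3

/-- Left endpoints of the level-`n` intervals. -/
def cE : (n : ℕ) → (Fin n → Bool) → ℝ
  | 0, _ => 0
  | n + 1, w => (cond (w 0) 2 0 + cE n (Fin.tail w)) / 3

lemma cantor_split {x : ℝ} (hx : x ∈ cantorSet) :
    ∃ (b : Bool), ∃ y ∈ cantorSet, x = (cond b 2 0 + y) / 3 := by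
  rw [cantorSet_eq_union_halves] at hx
  rcases hx with ⟨y, hy, rfl⟩ | ⟨y, hy, rfl⟩
  · exact ⟨false, y, hy, by simp⟩
  · exact ⟨true, y, hy, by simp⟩

lemma cantor_join (b : Bool) {y : ℝ} (hy : y ∈ cantorSet) : (cond b 2 0 + y) / 3 ∈ cantorSet := by
  rw [cantorSet_eq_union_halves]
  cases b
  · exact Or.inl ⟨y, hy, by simp⟩
  · exact Or.inr ⟨y, hy, by simp⟩

lemma cantor_cover (n : ℕ) :
    cantorSet ⊆ ⋃ w : Fin n → Bool, Set.Icc (cE n w) (cE n w + (1/3) ^ n) := by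
  induction n with
  | zero =>
    intro x hx
    have := cantorSet_subset_unitInterval hx
    simpa [cE] using this
  | succ n ih =>
    intro x hx
    obtain ⟨b, y, hy, rfl⟩ := cantor_split hx
    obtain ⟨w, hw⟩ := Set.mem_iUnion.1 (ih hy)
    refine Set.mem_iUnion.2 ⟨Fin.cons b w, ?_⟩
    simp only [cE, Fin.cons_zero, Fin.tail_cons, pow_succ, Set.mem_Icc] at hw ⊢
    constructor <;> linarith [hw.1, hw.2]

lemma hausdorff_cantor_le : (μH[cS] : Measure ℝ) cantorSet ≤ 1 := by
  have hr : Filter.Tendsto (fun n : ℕ => ENNReal.ofReal ((1/3) ^ n)) Filter.atTop (nhds 0) := by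
    rw [← ENNReal.ofReal_zero]
    exact ENNReal.tendsto_ofReal
      (tendsto_pow_atTop_nhds_zero_of_lt_one (by norm_num) (by norm_num))
  have hd : ∀ n (w : Fin n → Bool), Metric.ediam (Set.Icc (cE n w) (cE n w + (1/3) ^ n))
      = ENNReal.ofReal ((1/3) ^ n) := by
    intro n w; rw [Real.ediam_Icc]; congr 1; ring
  have h := Measure.hausdorffMeasure_le_liminf_sum (ι := fun n : ℕ => Fin n → Bool) cS cantorSet
    (l := Filter.atTop) _ hr (fun n w => Set.Icc (cE n w) (cE n w + (1/3) ^ n))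
    (Filter.Eventually.of_forall fun n w => (hd n w).le)
    (Filter.Eventually.of_forall fun n => cantor_cover n)
  refine h.trans (le_of_eq ?_)
  have : (fun n : ℕ => ∑ w : Fin n → Bool,
      Metric.ediam (Set.Icc (cE n w) (cE n w + (1/3) ^ n)) ^ cS) = fun _ => 1 := by
    funext n
    simp only [hd]
    rw [Finset.sum_const, Finset.card_univ, Fintype.card_fun, Fintype.card_bool, Fintype.card_fin,
      ENNReal.ofReal_rpow_of_nonneg (by positivity) cS_pos.le, ← Real.rpow_natCast,
      ← Real.rpow_mul (by norm_num), mul_comm, Real.rpow_mul (by norm_num),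
      Real.div_rpow (by norm_num) (by norm_num), Real.one_rpow, three_rpow_cS, Real.rpow_natCast,
      nsmul_eq_mul, ← ENNReal.ofReal_natCast, ← ENNReal.ofReal_mul (by positivity)]
    push_cast
    rw [← mul_pow]
    norm_num
  rw [this]; simp

lemma hausdorff_cantor : (μH[cS] : Measure ℝ) cantorSet = 1 :=
  le_antisymm hausdorff_cantor_le one_le_hausdorff_cantor

/-! ### The intersections `(C + t) ∩ C` -/

/-- `(C + t) ∩ C`. -/
def cK (t : ℝ) : Set ℝ := (fun x : ℝ => x + t) '' cantorSet ∩ cantorSet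

lemma mem_cK {t x : ℝ} : x ∈ cK t ↔ x - t ∈ cantorSet ∧ x ∈ cantorSet := by
  constructor
  · rintro ⟨⟨y, hy, rfl⟩, h⟩
    exact ⟨by simpa using hy, h⟩
  · rintro ⟨h, h'⟩
    exact ⟨⟨_, h, by simp⟩, h'⟩

lemma isClosed_cK (t : ℝ) : IsClosed (cK t) := by
  have : cK t = (fun x => x - t) ⁻¹' cantorSet ∩ cantorSet := by
    ext x; exact mem_cK
  rw [this]
  exact (isClosed_cantorSet.preimage (by fun_prop)).inter isClosed_cantorSet

lemma cK_finite (t : ℝ) : (μH[cS] : Measure ℝ) (cK t) ≠ ⊤ := by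
  refine ne_top_of_le_ne_top ENNReal.one_ne_top ?_
  rw [← hausdorff_cantor]
  exact measure_mono Set.inter_subset_right

lemma cK_null {t : ℝ} (ht : 1 ≤ |t|) : (μH[cS] : Measure ℝ) (cK t) = 0 := by
  have hn := Measure.nullSingletonClass_hausdorff ℝ cS_pos
  have hs : cK t ⊆ {0, 1} := by
    intro x hx
    obtain ⟨h1, h2⟩ := mem_cK.1 hx
    have h1 := cantorSet_subset_unitInterval h1
    have h2 := cantorSet_subset_unitInterval h2
    rcases le_abs.1 ht with h | h
    · right; exact le_antisymm h2.2 (by linarith [h1.1])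
    · left; exact le_antisymm (by linarith [h1.2]) h2.1
  refine measure_mono_null hs ?_
  exact (Set.toFinite {(0:ℝ), 1}).measure_zero _

lemma cK_zero : cK 0 = cantorSet := by
  simp [cK]

/-- The piece of `cK t` coming from digits `a`, `b`. -/
def cP (t : ℝ) (a b : Bool) : Set ℝ :=
  (fun y : ℝ => (cond b 2 0 + y) / 3) '' cK (3 * t + cond a 2 0 - cond b 2 0)

lemma mem_cP {t x : ℝ} {a b : Bool} :
    x ∈ cP t a b ↔ 3 * x - cond b 2 0 ∈ cantorSet ∧ 3 * (x - t) - cond a 2 0 ∈ cantorSet := by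
  constructor
  · rintro ⟨y, hy, rfl⟩
    obtain ⟨h1, h2⟩ := mem_cK.1 hy
    refine ⟨?_, ?_⟩
    · convert h2 using 1; ring
    · convert h1 using 1; ring
  · rintro ⟨h1, h2⟩
    refine ⟨3 * x - cond b 2 0, mem_cK.2 ⟨?_, h1⟩, by ring⟩
    convert h2 using 1; ring

lemma isClosed_cP (t : ℝ) (a b : Bool) : IsClosed (cP t a b) := by
  have : cP t a b = (fun x : ℝ => 3 * x - cond b 2 0) ⁻¹' cantorSet ∩
      (fun x : ℝ => 3 * (x - t) - cond a 2 0) ⁻¹' cantorSet := by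
    ext x; exact mem_cP
  rw [this]
  exact (isClosed_cantorSet.preimage (by fun_prop)).inter (isClosed_cantorSet.preimage (by fun_prop))

lemma digit_disj {x : ℝ} {a a' : Bool} (h : 3 * x - cond a 2 0 ∈ cantorSet)
    (h' : 3 * x - cond a' 2 0 ∈ cantorSet) : a = a' := by
  have h := cantorSet_subset_unitInterval h
  have h' := cantorSet_subset_unitInterval h'
  cases a <;> cases a' <;> simp only [cond_true, cond_false, Set.mem_Icc] at h h' ⊢ <;>
    linarith [h.1, h.2, h'.1, h'.2]

lemma cK_eq (t : ℝ) : cK t = ⋃ p : Bool × Bool, cP t p.1 p.2 := by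
  ext x
  simp only [Set.mem_iUnion, mem_cK]
  constructor
  · rintro ⟨h1, h2⟩
    obtain ⟨a, y, hy, h1⟩ := cantor_split h1
    obtain ⟨b, w, hw, h2⟩ := cantor_split h2
    refine ⟨(a, b), mem_cP.2 ⟨?_, ?_⟩⟩
    · convert hw using 1; rw [h2]; ring
    · convert hy using 1; rw [h1]; ring
  · rintro ⟨⟨a, b⟩, h⟩
    obtain ⟨h1, h2⟩ := mem_cP.1 h
    refine ⟨?_, ?_⟩
    · convert cantor_join a h2 using 1; ring
    · convert cantor_join b h1 using 1; ring

open scoped Pointwise in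
lemma cP_measure (t : ℝ) (a b : Bool) : ((μH[cS] : Measure ℝ) (cP t a b)).toReal =
    1/2 * ((μH[cS] : Measure ℝ) (cK (3 * t + cond a 2 0 - cond b 2 0))).toReal := by
  rw [cP]
  set A := cK (3 * t + cond a 2 0 - cond b 2 0)
  have : (fun y : ℝ => (cond b 2 0 + y) / 3) '' A
      = (1/3 : ℝ) • ((fun y => cond b 2 0 + y) '' A) := by
    rw [← Set.image_smul, Set.image_image]
    congr 1; funext y; simp; ring
  rw [this, Measure.hausdorffMeasure_smul₀ cS_pos.le (by norm_num),
    (isometry_add_left (cond b 2 0 : ℝ)).hausdorffMeasure_image (Or.inl cS_pos.le)]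
  rw [ENNReal.smul_def, smul_eq_mul, ENNReal.toReal_mul, ENNReal.coe_toReal, NNReal.coe_rpow]
  congr 1
  rw [coe_nnnorm, Real.norm_of_nonneg (by norm_num), div_three_rpow zero_le_one, Real.one_rpow]

/-- The real-valued function `t ↦ H^s((C+t) ∩ C)`. -/
def cH (t : ℝ) : ℝ := ((μH[cS] : Measure ℝ) (cK t)).toReal

lemma cH_rec (t : ℝ) : cH t = cH (3 * t) + 1/2 * (cH (3 * t + 2) + cH (3 * t - 2)) := by
  have hd : Pairwise (Function.onFun Disjoint fun p : Bool × Bool => cP t p.1 p.2) := by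
    rintro ⟨a, b⟩ ⟨a', b'⟩ hne
    refine Set.disjoint_left.2 fun x h h' => hne ?_
    obtain ⟨h1, h2⟩ := mem_cP.1 h
    obtain ⟨h1', h2'⟩ := mem_cP.1 h'
    rw [Prod.mk.injEq]
    exact ⟨digit_disj h2 h2', digit_disj h1 h1'⟩
  have hfin : ∀ p : Bool × Bool, (μH[cS] : Measure ℝ) (cP t p.1 p.2) ≠ ⊤ := by
    intro p
    refine ne_top_of_le_ne_top (cK_finite t) (measure_mono ?_)
    rw [cK_eq]; exact Set.subset_iUnion (fun p : Bool × Bool => cP t p.1 p.2) p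
  have h := measure_iUnion (μ := (μH[cS] : Measure ℝ)) hd (fun p => (isClosed_cP t p.1 p.2).measurableSet)
  rw [← cK_eq, tsum_fintype] at h
  rw [cH, h, ENNReal.toReal_sum (fun p _ => hfin p), Fintype.sum_prod_type]
  simp only [cP_measure, Fintype.sum_bool, cond_true, cond_false, add_zero, sub_zero,
    add_sub_cancel_right]
  simp only [cH]
  ring

/-! ### The Fourier coefficients of the measure -/

lemma measurable_coord (n : ℤ) : Measurable (fun z : Solenoid 3 => z.val n) :=
  (measurable_pi_apply n).comp measurable_subtype_coe

lemma measurable_coord_zpow (n l : ℤ) :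
    Measurable (fun z : Solenoid 3 => ((z.val n : Circle) : ℂ) ^ l) := by
  have h : Continuous (fun w : Circle => ((w ^ l : Circle) : ℂ)) :=
    (show Continuous (fun w : Circle => (w : ℂ)) by fun_prop).comp (continuous_zpow l)
  have := h.measurable.comp (measurable_coord n)
  simpa [Function.comp_def] using this

lemma integrable_coord_zpow (m : Measure (Solenoid 3)) [IsProbabilityMeasure m] (n l : ℤ) :
    Integrable (fun z : Solenoid 3 => ((z.val n : Circle) : ℂ) ^ l) m := by
  refine Integrable.of_bound (measurable_coord_zpow n l).aestronglyMeasurable 1 ?_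
  exact Filter.Eventually.of_forall fun z => by
    rw [norm_zpow, Circle.norm_coe, one_zpow]

lemma measurable_shiftInv : Measurable (shiftInv 3) := by
  refine Measurable.subtype_mk ?_
  exact measurable_pi_lambda _ fun n => measurable_coord (n + 1)

lemma coord_pow (z : Solenoid 3) (p : ℕ) : (z.val p) ^ (3 ^ p) = z.val 0 := by
  induction p with
  | zero => simp
  | succ p ih =>
    rw [pow_succ', pow_mul, ← ih]
    congr 1
    have := z.property p
    exact_mod_cast this

lemma weight_eq (w : Circle) :
    ((‖(1 + (w : ℂ) ^ 2) / Real.sqrt 2‖ ^ 2 : ℝ) : ℂ)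
      = 1 + ((w : ℂ) ^ (2:ℤ) + (w : ℂ) ^ (-2:ℤ)) / 2 := by
  have hw : (w : ℂ) ≠ 0 := Circle.coe_ne_zero w
  rw [norm_div, div_pow, Complex.norm_real, Real.norm_of_nonneg (Real.sqrt_nonneg _),
    Real.sq_sqrt (by norm_num)]
  push_cast
  rw [← Complex.mul_conj']
  simp only [map_add, map_one, map_pow]
  rw [← Circle.coe_inv_eq_conj, Circle.coe_inv, zpow_neg]
  have : (w:ℂ) ^ (2:ℤ) = (w:ℂ)^2 := by norm_cast
  rw [this]
  field_simp
  ring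

lemma coeff_step (m : Measure (Solenoid 3))
    (hm : IsAssociatedMeasure 3
      (fun z => ‖(1 + ((z : ℂ)) ^ 2) / Real.sqrt 2‖ ^ 2 / 3) m) (l : ℤ) (p : ℕ) :
    ∫ z : Solenoid 3, ((z.val ((p + 1 : ℕ) : ℤ) : Circle) : ℂ) ^ l ∂m =
      ∫ z : Solenoid 3, ((z.val p : Circle) : ℂ) ^ l ∂m + 1/2 * (
      ∫ z : Solenoid 3, ((z.val p : Circle) : ℂ) ^ (l + 2 * 3 ^ p) ∂m +
      ∫ z : Solenoid 3, ((z.val p : Circle) : ℂ) ^ (l - 2 * 3 ^ p) ∂m) := by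
  obtain ⟨hp, -, hS⟩ := hm
  have h1 : ∫ z : Solenoid 3, ((z.val ((p + 1 : ℕ) : ℤ) : Circle) : ℂ) ^ l ∂m
      = ∫ z, ((z.val p : Circle) : ℂ) ^ l ∂(measShift 3 m) := by
    rw [measShift, integral_map measurable_shiftInv.aemeasurable
      (measurable_coord_zpow p l).aestronglyMeasurable]
    rfl
  have hc : Continuous (fun w : Circle => ((3:ℕ):ℝ) * (‖(1 + (w : ℂ) ^ 2) / Real.sqrt 2‖ ^ 2 / 3)) := by
    fun_prop
  have hS' : measShift 3 m = m.withDensity (fun z => ENNReal.ofReal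
      (((3:ℕ):ℝ) * (‖(1 + ((z.val 0 : Circle) : ℂ) ^ 2) / Real.sqrt 2‖ ^ 2 / 3))) := hS
  have hmeas : Measurable (fun z : Solenoid 3 => ENNReal.ofReal
      (((3:ℕ):ℝ) * (‖(1 + ((z.val 0 : Circle) : ℂ) ^ 2) / Real.sqrt 2‖ ^ 2 / 3))) :=
    (hc.measurable.comp (measurable_coord 0)).ennreal_ofReal
  rw [h1, hS', integral_withDensity_eq_integral_toReal_smul hmeas
    (Filter.Eventually.of_forall fun z => ENNReal.ofReal_lt_top)]
  have hi : Integrable (fun z : Solenoid 3 => (1/2 : ℂ) * (((z.val p : Circle) : ℂ) ^ (l + 2 * 3 ^ p) +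
      ((z.val p : Circle) : ℂ) ^ (l - 2 * 3 ^ p))) m :=
    ((integrable_coord_zpow m _ _).add (integrable_coord_zpow m _ _)).const_mul _
  rw [← integral_add (integrable_coord_zpow m _ _) (integrable_coord_zpow m _ _),
    ← integral_const_mul, ← integral_add (integrable_coord_zpow m _ _) hi]
  refine integral_congr_ae (Filter.Eventually.of_forall fun z => ?_)
  simp only
  rw [ENNReal.toReal_ofReal (by positivity), Complex.real_smul]
  have e : ((3:ℕ):ℝ) * (‖(1 + ((z.val 0 : Circle) : ℂ) ^ 2) / Real.sqrt 2‖ ^ 2 / 3)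
      = ‖(1 + ((z.val 0 : Circle) : ℂ) ^ 2) / Real.sqrt 2‖ ^ 2 := by
    push_cast; ring
  rw [e, weight_eq, ← coord_pow z p]
  have hw : ((z.val p : Circle) : ℂ) ≠ 0 := Circle.coe_ne_zero _
  generalize ((z.val p : Circle)) = w at *
  have e2 : ∀ k : ℤ, ((w ^ 3 ^ p : Circle) : ℂ) ^ k = (w : ℂ) ^ (k * 3 ^ p) := by
    intro k
    rw [Circle.coe_pow, mul_comm, zpow_mul]
    norm_cast
  rw [e2, e2, sub_eq_add_neg, zpow_add₀ hw, zpow_add₀ hw, ← neg_mul]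
  ring

lemma coeff_zero (m : Measure (Solenoid 3))
    (hm : m.map (fun z : Solenoid 3 => z.val 0) = circleMeasure) (l : ℤ) :
    ∫ z : Solenoid 3, ((z.val 0 : Circle) : ℂ) ^ l ∂m = if l = 0 then 1 else 0 := by
  have h : Continuous (fun w : Circle => ((w : Circle) : ℂ) ^ l) := by
    have h : Continuous (fun w : Circle => ((w ^ l : Circle) : ℂ)) :=
    (show Continuous (fun w : Circle => (w : ℂ)) by fun_prop).comp (continuous_zpow l)
    simpa using h
  have hee : Continuous ee := by unfold ee; fun_prop
  have h1 : ∫ z : Solenoid 3, ((z.val 0 : Circle) : ℂ) ^ l ∂m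
      = ∫ w, (w : ℂ) ^ l ∂(m.map (fun z : Solenoid 3 => z.val 0)) := by
    rw [integral_map (measurable_coord 0).aemeasurable h.measurable.aestronglyMeasurable]
  rw [h1, hm, circleMeasure, integral_map hee.measurable.aemeasurable
    h.measurable.aestronglyMeasurable]
  have e : ∀ x : ℝ, ((ee x : Circle) : ℂ) ^ l = Complex.exp ((-(2 * Real.pi * l * Complex.I)) * x) := by
    intro x
    rw [ee, Circle.coe_exp, ← Complex.exp_int_mul]
    congr 1; push_cast; ring
  simp only [e]
  rw [integral_Ico_eq_integral_Ioc, ← intervalIntegral.integral_of_le zero_le_one]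
  split_ifs with hl
  · subst hl; simp
  · have hne : (-(2 * Real.pi * l * Complex.I) : ℂ) ≠ 0 := by
      simp [hl, Real.pi_ne_zero]
    rw [integral_exp_mul_complex hne]
    have : Complex.exp (-(2 * Real.pi * l * Complex.I) * (1:ℝ)) = 1 := by
      rw [Complex.exp_eq_one_iff]
      exact ⟨-l, by push_cast; ring⟩
    rw [this]; simp

lemma coeff_eq (m : Measure (Solenoid 3))
    (hm : IsAssociatedMeasure 3
      (fun z => ‖(1 + ((z : ℂ)) ^ 2) / Real.sqrt 2‖ ^ 2 / 3) m) (l : ℤ) (p : ℕ) :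
    ∫ z : Solenoid 3, ((z.val p : Circle) : ℂ) ^ l ∂m = ((cH ((l : ℝ) / 3 ^ p) : ℝ) : ℂ) := by
  induction p generalizing l with
  | zero =>
    have := coeff_zero m hm.2.1 l
    simp only [Nat.cast_zero, pow_zero, div_one]
    rw [this]
    split_ifs with hl
    · subst hl
      simp [cH, cK_zero, hausdorff_cantor]
    · rw [cH, cK_null (by exact_mod_cast Int.one_le_abs hl)]; simp
  | succ p ih =>
    rw [coeff_step m hm, ih, ih, ih, cH_rec ((l:ℝ) / 3 ^ (p + 1))]
    have h3 : (3:ℝ) ^ p ≠ 0 := by positivity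
    have e1 : 3 * ((l:ℝ) / 3 ^ (p + 1)) = l / 3 ^ p := by rw [pow_succ]; field_simp
    have e2 : ((l + 2 * 3 ^ p : ℤ) : ℝ) / 3 ^ p = l / 3 ^ p + 2 := by push_cast; field_simp
    have e3 : ((l - 2 * 3 ^ p : ℤ) : ℝ) / 3 ^ p = l / 3 ^ p - 2 := by push_cast; field_simp
    rw [e1, e2, e3]; push_cast; ring

end CantorPart

open MeasureTheory Real Complex Filter Finset in
/-- Lemma 4.2.2. Let `N = 3`, `m₀(z) = (1+z²)/√2`,
`W = |m₀|²/3` and `m` the associated measure on `S₃`.  Then for every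
`λ = l/3^p ∈ ℤ[1/3]`,
`m̂(λ) = 𝓗^s((𝐂+λ) ∩ 𝐂)` where `𝐂` is the middle-thirds Cantor set (Mathlib's `cantorSet`),
`s = log₃ 2` and `𝓗^s` is the `s`-dimensional Hausdorff measure; in particular
`m̂(λ) = 0` whenever `|λ| ≥ 1`. -/
theorem statement_18
    (m : Measure (Solenoid 3))
    (hm : IsAssociatedMeasure 3
      (fun z => ‖(1 + ((z : ℂ)) ^ 2) / Real.sqrt 2‖ ^ 2 / 3) m) :
    (∀ (l : ℤ) (p : ℕ),
      ∫ z : Solenoid 3, ((z.val p : Circle) : ℂ) ^ l ∂m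
        = (((μH[Real.logb 3 2]
              ((fun x : ℝ => x + (l : ℝ) / 3 ^ p) '' cantorSet ∩ cantorSet)).toReal : ℝ) : ℂ)) ∧
    (∀ (l : ℤ) (p : ℕ), 1 ≤ |(l : ℝ) / 3 ^ p| →
      ∫ z : Solenoid 3, ((z.val p : Circle) : ℂ) ^ l ∂m = 0) := by
  have key := coeff_eq m hm
  refine ⟨fun l p => key l p, fun l p h => ?_⟩
  rw [key, cH, cK_null h]; simp
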